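/- Let N = 4, λ ∈ ℝ and μ > 0, and let Ω ⊂ ℝ⁴ be a bounded open set with 0 ∈ Ω. For every ρ ∈ (0,1] satisfying 8^μ > 25^μ·e^{2μ−λ}·ρ^{2μ} and with the closed ball B_{2ρ}(0) contained in Ω, and for every radial cutoff ψ and U_ε as in the context, there exists ε₀ > 0 such that for every ε ∈ (0, ε₀) and every t ≥ 0, I(t·U_ε) < K₄ / 4, where K₄ = ∫_{ℝ⁴} |∇u_1(x)|² dx. -/

import Mathlib

open MeasureTheory

/-!
By the tangent-line bound `s - 1 ≤ s log s` for `s = t²`, the energy `I(t U_ε)` is at most a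
quadratic polynomial in `t²`, so the supremum over `t` reduces to an inequality between the
integrals of `|∇U_ε|²`, `U_ε²`, `U_ε⁴` and `U_ε² log U_ε²`. In polar coordinates all of these
have explicit primitives for the bubble itself. The terms of order `ε² log² ε` cancel, and the
logarithm lowers the energy by `Γ ε² |log ε|`, up to a positive factor, with
`Γ = λ - 2μ + μ log 8 - 2μ log R`, where `R` is the radius beyond which the cutoff vanishes. The
errors caused by the cutoff are `O(ε²)`, so the sign of `Γ` decides.
-/

open Filter Metric Module Real Set Topology

section Radial

variable {E F : Type*} [NormedAddCommGroup E] [NormedAddCommGroup F]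

theorem norm_fderiv_comp_norm [InnerProductSpace ℝ E] {g : ℝ → ℝ} {x : E} (hx : x ≠ 0)
    (hg : DifferentiableAt ℝ g ‖x‖) : ‖fderiv ℝ (fun y => g ‖y‖) x‖ = |deriv g ‖x‖| := by
  have : Nontrivial E := ⟨x, 0, hx⟩
  have hnorm : DifferentiableAt ℝ (‖·‖) x := (contDiffAt_norm ℝ hx).differentiableAt one_ne_zero
  have hcomp := hg.hasDerivAt.comp_hasFDerivAt x hnorm.hasFDerivAt
  rw [show (fun y : E => g ‖y‖) = g ∘ (‖·‖) from rfl, hcomp.fderiv, norm_smul,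
    norm_fderiv_norm hnorm, mul_one, Real.norm_eq_abs]

theorem setIntegral_norm_fderiv_comp_norm_sq [InnerProductSpace ℝ E] [MeasurableSpace E]
    (ν : Measure E) [NullSingletonClass ν] {g : ℝ → ℝ} (hg : Differentiable ℝ g) (s : Set E) :
    ∫ x in s, ‖fderiv ℝ (fun y => g ‖y‖) x‖ ^ 2 ∂ν = ∫ x in s, deriv g ‖x‖ ^ 2 ∂ν := by
  refine integral_congr_ae ?_
  filter_upwards [Measure.ae_ne _ 0] with x hx
  rw [norm_fderiv_comp_norm hx (hg _), sq_abs]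

variable [NormedSpace ℝ E] [FiniteDimensional ℝ E] [MeasurableSpace E] [BorelSpace E]
  (ν : Measure E) [ν.IsAddHaarMeasure] {R : ℝ}

theorem integrable_comp_norm {f : ℝ → F} (hf : Continuous f) (hfR : ∀ r, R < r → f r = 0) :
    Integrable (fun x : E => f ‖x‖) ν := by
  refine (hf.comp continuous_norm).integrable_of_hasCompactSupport <|
    .intro (isCompact_closedBall 0 R) fun x hx => hfR _ ?_
  simpa using hx

theorem setIntegral_fun_norm_addHaar [Nontrivial E] [NormedSpace ℝ F] (hR : 0 ≤ R) {f : ℝ → F}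
    (hfR : ∀ r, R < r → f r = 0) {s : Set E} (hs : closedBall 0 R ⊆ s) :
    ∫ x in s, f ‖x‖ ∂ν =
      finrank ℝ E • ν.real (ball 0 1) • ∫ r in 0..R, r ^ (finrank ℝ E - 1) • f r := by
  have houtside : ∀ x ∉ s, f ‖x‖ = 0 := fun x hx =>
    hfR _ <| not_le.1 fun h => hx <| hs <| mem_closedBall_zero_iff.2 h
  rw [setIntegral_eq_integral_of_forall_compl_eq_zero houtside, integral_fun_norm_addHaar,
    intervalIntegral.integral_of_le hR]
  congr 2
  refine setIntegral_eq_of_subset_of_forall_sdiff_eq_zero measurableSet_Ioi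
    (fun r hr => hr.1) fun r hr => ?_
  rw [hfR r (not_le.1 fun h => hr.2 ⟨hr.1, h⟩), smul_zero]

end Radial

theorem intervalIntegral_le_add_of_le_add {a b c : ℝ} (hab : a ≤ b) {f g : ℝ → ℝ}
    (hf : IntervalIntegrable f volume a b) (hg : IntervalIntegrable g volume a b)
    (h : ∀ x ∈ Ioo a b, f x ≤ g x + c) :
    ∫ x in a..b, f x ≤ (∫ x in a..b, g x) + (b - a) * c := by
  have hmono := intervalIntegral.integral_mono_on_of_le_Ioo hab hf
    (hg.add intervalIntegrable_const) h
  rwa [intervalIntegral.integral_add hg intervalIntegrable_const,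
    intervalIntegral.integral_const, smul_eq_mul] at hmono

section Energy

variable {E : Type*} [NormedAddCommGroup E] [NormedSpace ℝ E] [MeasureSpace E]
  {lam μ : ℝ} {Ω : Set E} {v : E → ℝ} {t : ℝ}

/-- The Brezis–Nirenberg energy `I` with a logarithmic perturbation, on `Ω`. The positive part is
`v₊ = max v 0`, and the exponent `4` is the critical Sobolev exponent in dimension four. -/
noncomputable def logEnergy (lam μ : ℝ) (Ω : Set E) (v : E → ℝ) : ℝ :=
  (1 / 2) * (∫ x in Ω, ‖fderiv ℝ v x‖ ^ 2) -
    (1 / 4) * (∫ x in Ω, (max (v x) 0) ^ 4) -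
    (lam / 2) * (∫ x in Ω, (max (v x) 0) ^ 2) -
    (μ / 2) * (∫ x in Ω, (max (v x) 0) ^ 2 * (log ((max (v x) 0) ^ 2) - 1))

theorem mul_sq_mul_log_sq_sub_one (t a : ℝ) :
    (t * a) ^ 2 * (log ((t * a) ^ 2) - 1) =
      t ^ 2 * (a ^ 2 * log (a ^ 2)) + (t ^ 2 * log (t ^ 2) - t ^ 2) * a ^ 2 := by
  rcases eq_or_ne t 0 with rfl | ht
  · simp
  rcases eq_or_ne a 0 with rfl | ha
  · simp
  rw [mul_pow, log_mul (by positivity) (by positivity)]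
  ring

theorem logEnergy_const_mul (hv : ∀ x, 0 ≤ v x) (hsq : IntegrableOn (fun x => v x ^ 2) Ω)
    (hlog : IntegrableOn (fun x => v x ^ 2 * log (v x ^ 2)) Ω) (ht : 0 ≤ t) :
    logEnergy lam μ Ω (fun x => t * v x) =
      t ^ 2 / 2 * ((∫ x in Ω, ‖fderiv ℝ v x‖ ^ 2) -
        ∫ x in Ω, v x ^ 2 * (lam - μ + μ * log (v x ^ 2))) -
      (t ^ 2) ^ 2 / 4 * (∫ x in Ω, v x ^ 4) -
      μ / 2 * (t ^ 2 * log (t ^ 2)) * ∫ x in Ω, v x ^ 2 := by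
  have hmax (x : E) : max (t * v x) 0 = t * v x := max_eq_left (mul_nonneg ht (hv x))
  have hgrad (x : E) : ‖fderiv ℝ (fun y => t * v y) x‖ ^ 2 = t ^ 2 * ‖fderiv ℝ v x‖ ^ 2 := by
    rw [show (fun y => t * v y) = t • v from rfl, fderiv_const_smul_field, Pi.smul_apply,
      norm_smul, mul_pow, Real.norm_eq_abs, sq_abs]
  have hpot (x : E) : v x ^ 2 * (lam - μ + μ * log (v x ^ 2)) =
      (lam - μ) * v x ^ 2 + μ * (v x ^ 2 * log (v x ^ 2)) := by ring
  simp only [logEnergy, hmax, hgrad, hpot, mul_sq_mul_log_sq_sub_one]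
  rw [integral_add (hlog.const_mul _) (hsq.const_mul _),
    integral_add (hsq.const_mul _) (hlog.const_mul _)]
  simp only [mul_pow, integral_const_mul]
  ring

/-- The term `s log s`, `s = t²`, is bounded below by its tangent `s - 1` at `s = 1`; what remains
is a quadratic polynomial in `s`, whose maximum is computed by completing the square. -/
theorem logEnergy_const_mul_lt (hμ : 0 ≤ μ) (hv : ∀ x, 0 ≤ v x)
    (hsq : IntegrableOn (fun x => v x ^ 2) Ω)
    (hlog : IntegrableOn (fun x => v x ^ 2 * log (v x ^ 2)) Ω) {m b k : ℝ} (hb : 0 < b)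
    (hm : (∫ x in Ω, ‖fderiv ℝ v x‖ ^ 2) -
      (∫ x in Ω, v x ^ 2 * (lam - μ + μ * log (v x ^ 2))) ≤ m)
    (hbv : b ≤ ∫ x in Ω, v x ^ 4)
    (hlt : (m - μ * ∫ x in Ω, v x ^ 2) ^ 2 < b * (k - 2 * (μ * ∫ x in Ω, v x ^ 2)))
    (ht : 0 ≤ t) :
    logEnergy lam μ Ω (fun x => t * v x) < k / 4 := by
  rw [logEnergy_const_mul hv hsq hlog ht]
  set c := ∫ x in Ω, v x ^ 2
  set s := t ^ 2
  have hc : 0 ≤ c := integral_nonneg fun x => sq_nonneg _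
  have hs : 0 ≤ s := sq_nonneg t
  have htangent : s - 1 ≤ s * log s := by
    linarith [InformationTheory.klFun_nonneg hs, InformationTheory.klFun_apply s]
  have hquad : s / 2 * m - s ^ 2 / 4 * b - μ / 2 * (s - 1) * c < k / 4 := by
    refine lt_of_mul_lt_mul_left ?_ hb.le
    nlinarith [sq_nonneg (s * b - (m - μ * c))]
  linarith [mul_le_mul_of_nonneg_left hm hs, mul_le_mul_of_nonneg_left hbv (sq_nonneg s),
    mul_le_mul_of_nonneg_left htangent (mul_nonneg hμ hc)]

end Energy

section Bubble

/-- The radial profile of the Aubin–Talenti bubble of `ℝ⁴`: the bubble itself is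
`x ↦ bubble ε ‖x‖`. -/
noncomputable def bubble (ε r : ℝ) : ℝ := √8 * ε / (ε ^ 2 + r ^ 2)

variable {ε r ρ R : ℝ}

theorem bubble_nonneg (hε : 0 ≤ ε) (r : ℝ) : 0 ≤ bubble ε r := by
  unfold bubble
  positivity

theorem bubble_sq (ε r : ℝ) : bubble ε r ^ 2 = 8 * ε ^ 2 / (ε ^ 2 + r ^ 2) ^ 2 := by
  rw [bubble, div_pow, mul_pow, sq_sqrt (by norm_num)]

theorem bubble_pow_four (ε r : ℝ) : bubble ε r ^ 4 = 64 * ε ^ 4 / (ε ^ 2 + r ^ 2) ^ 4 := by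
  rw [show bubble ε r ^ 4 = (bubble ε r ^ 2) ^ 2 by ring, bubble_sq, div_pow]
  congr 1 <;> ring

theorem bubble_sq_le (ε : ℝ) (hρ : 0 < ρ) (hr : ρ ≤ r) :
    bubble ε r ^ 2 ≤ 8 / ρ ^ 4 * ε ^ 2 := by
  have hw : ρ ^ 2 ≤ ε ^ 2 + r ^ 2 :=
    le_add_of_nonneg_of_le (sq_nonneg ε) (pow_le_pow_left₀ hρ.le hr 2)
  calc bubble ε r ^ 2 = 8 * ε ^ 2 / (ε ^ 2 + r ^ 2) ^ 2 := bubble_sq ε r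
    _ ≤ 8 * ε ^ 2 / (ρ ^ 2) ^ 2 := by gcongr
    _ = 8 / ρ ^ 4 * ε ^ 2 := by ring

theorem bubble_pow_four_le (ε : ℝ) (hρ : 0 < ρ) (hr : ρ ≤ r) :
    bubble ε r ^ 4 ≤ 64 / ρ ^ 6 * ε ^ 2 := by
  have hw : ρ ^ 2 ≤ ε ^ 2 + r ^ 2 :=
    le_add_of_nonneg_of_le (sq_nonneg ε) (pow_le_pow_left₀ hρ.le hr 2)
  rcases eq_or_ne ε 0 with rfl | hε
  · simp [bubble]
  calc bubble ε r ^ 4 = 64 * ε ^ 4 / ((ε ^ 2 + r ^ 2) * (ε ^ 2 + r ^ 2) ^ 3) := by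
        rw [bubble_pow_four, ← pow_succ']
    _ ≤ 64 * ε ^ 4 / (ε ^ 2 * (ρ ^ 2) ^ 3) := by
        gcongr
        exact le_add_of_nonneg_right (sq_nonneg r)
    _ = 64 / ρ ^ 6 * ε ^ 2 := by field_simp

theorem log_bubble_sq (hε : ε ≠ 0) (r : ℝ) :
    log (bubble ε r ^ 2) = log 8 + 2 * log ε - 2 * log (ε ^ 2 + r ^ 2) := by
  rw [bubble_sq, log_div (by positivity) (by positivity), log_mul (by norm_num) (by positivity),
    log_pow, log_pow]
  norm_num

theorem contDiff_bubble (hε : ε ≠ 0) {n : WithTop ℕ∞} : ContDiff ℝ n (bubble ε) := by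
  unfold bubble
  exact contDiff_const.div (by fun_prop) fun r => by positivity

theorem hasDerivAt_sq_add_sq (ε r : ℝ) :
    HasDerivAt (fun r : ℝ => ε ^ 2 + r ^ 2) (2 * r) r := by
  simpa using (hasDerivAt_pow 2 r).const_add (ε ^ 2)

theorem deriv_bubble (hε : ε ≠ 0) (r : ℝ) :
    deriv (bubble ε) r = -(√8 * ε * (2 * r)) / (ε ^ 2 + r ^ 2) ^ 2 := by
  have hw : ε ^ 2 + r ^ 2 ≠ 0 := by positivity
  have h := (hasDerivAt_const r (√8 * ε)).fun_div (hasDerivAt_sq_add_sq ε r) hw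
  rw [show bubble ε = fun r => √8 * ε / (ε ^ 2 + r ^ 2) from rfl, h.deriv, zero_mul, zero_sub]

theorem deriv_bubble_sq (hε : ε ≠ 0) (r : ℝ) :
    deriv (bubble ε) r ^ 2 = 32 * ε ^ 2 * r ^ 2 / (ε ^ 2 + r ^ 2) ^ 4 := by
  rw [deriv_bubble hε, div_pow, neg_sq, mul_pow, mul_pow, sq_sqrt (by norm_num)]
  ring

theorem deriv_bubble_sq_le (hε : ε ≠ 0) (hρ : 0 < ρ) (hr : ρ ≤ r) :
    deriv (bubble ε) r ^ 2 ≤ 32 / ρ ^ 6 * ε ^ 2 := by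
  have hw : ρ ^ 2 ≤ ε ^ 2 + r ^ 2 :=
    le_add_of_nonneg_of_le (sq_nonneg ε) (pow_le_pow_left₀ hρ.le hr 2)
  calc deriv (bubble ε) r ^ 2 =
        32 * ε ^ 2 * r ^ 2 / ((ε ^ 2 + r ^ 2) * (ε ^ 2 + r ^ 2) ^ 3) := by
        rw [deriv_bubble_sq hε, ← pow_succ']
    _ ≤ 32 * ε ^ 2 * r ^ 2 / (r ^ 2 * (ρ ^ 2) ^ 3) := by
        have hr₀ : 0 < r := hρ.trans_le hr
        gcongr
        exact le_add_of_nonneg_left (sq_nonneg ε)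
    _ = 32 / ρ ^ 6 * ε ^ 2 := by
        have hr₀ : r ≠ 0 := (hρ.trans_le hr).ne'
        field_simp

theorem hasDerivAt_sq_div_sq_add_sq (hε : ε ≠ 0) (r : ℝ) :
    HasDerivAt (fun r : ℝ => r ^ 2 / (ε ^ 2 + r ^ 2))
      (2 * r * ε ^ 2 / (ε ^ 2 + r ^ 2) ^ 2) r := by
  have hsq : HasDerivAt (fun r : ℝ => r ^ 2) (2 * r) r := by simpa using hasDerivAt_pow 2 r
  refine (hsq.fun_div (hasDerivAt_sq_add_sq ε r) (by positivity)).congr_deriv ?_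
  ring

theorem hasDerivAt_primitive_deriv_bubble_sq (hε : ε ≠ 0) (r : ℝ) :
    HasDerivAt (fun r : ℝ => 16 / 3 * (r ^ 2 / (ε ^ 2 + r ^ 2)) ^ 3)
      (r ^ 3 * deriv (bubble ε) r ^ 2) r := by
  refine (((hasDerivAt_sq_div_sq_add_sq hε r).fun_pow 3).const_mul (16 / 3)).congr_deriv ?_
  rw [deriv_bubble_sq hε]
  simp only [Nat.add_one_sub_one, Nat.cast_ofNat]
  field_simp
  ring

theorem hasDerivAt_primitive_bubble_pow_four (hε : ε ≠ 0) (r : ℝ) :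
    HasDerivAt (fun r : ℝ => 16 * (r ^ 2 / (ε ^ 2 + r ^ 2)) ^ 2 -
        32 / 3 * (r ^ 2 / (ε ^ 2 + r ^ 2)) ^ 3)
      (r ^ 3 * bubble ε r ^ 4) r := by
  have hq := hasDerivAt_sq_div_sq_add_sq hε r
  refine (((hq.fun_pow 2).const_mul 16).fun_sub ((hq.fun_pow 3).const_mul (32 / 3))).congr_deriv ?_
  rw [bubble_pow_four]
  simp only [Nat.add_one_sub_one, Nat.cast_ofNat, pow_one]
  field_simp
  ring

theorem hasDerivAt_primitive_bubble_sq_mul_log (F μ : ℝ) (hε : ε ≠ 0) (r : ℝ) :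
    HasDerivAt (fun r : ℝ => 4 * ε ^ 2 *
        ((F + μ * log 8 + 2 * μ * log ε) * (log (ε ^ 2 + r ^ 2) + ε ^ 2 / (ε ^ 2 + r ^ 2)) -
          μ * log (ε ^ 2 + r ^ 2) ^ 2 -
          2 * μ * (ε ^ 2 / (ε ^ 2 + r ^ 2) * (log (ε ^ 2 + r ^ 2) + 1))))
      (r ^ 3 * (bubble ε r ^ 2 * (F + μ * log (bubble ε r ^ 2)))) r := by
  have hw : ε ^ 2 + r ^ 2 ≠ 0 := by positivity
  have hlog := (hasDerivAt_sq_add_sq ε r).log hw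
  have hdiv := (hasDerivAt_const r (ε ^ 2)).fun_div (hasDerivAt_sq_add_sq ε r) hw
  refine (((((hlog.fun_add hdiv).const_mul (F + μ * log 8 + 2 * μ * log ε)).fun_sub
    ((hlog.fun_pow 2).const_mul μ)).fun_sub
    ((hdiv.fun_mul (hlog.add_const 1)).const_mul (2 * μ))).const_mul (4 * ε ^ 2)).congr_deriv ?_
  rw [log_bubble_sq hε, bubble_sq]
  field_simp
  ring

theorem continuous_deriv_bubble (hε : ε ≠ 0) : Continuous (deriv (bubble ε)) :=
  (contDiff_bubble (n := 1) hε).continuous_deriv_one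

theorem integral_deriv_bubble_sq (hε : ε ≠ 0) (R : ℝ) :
    ∫ r in 0..R, r ^ 3 * deriv (bubble ε) r ^ 2 = 16 / 3 * (R ^ 2 / (ε ^ 2 + R ^ 2)) ^ 3 := by
  have hcont := continuous_deriv_bubble hε
  rw [intervalIntegral.integral_eq_sub_of_hasDerivAt
    (fun r _ => hasDerivAt_primitive_deriv_bubble_sq hε r)
    (Continuous.intervalIntegrable (by fun_prop) _ _)]
  simp

theorem integral_bubble_pow_four (hε : ε ≠ 0) (R : ℝ) :
    ∫ r in 0..R, r ^ 3 * bubble ε r ^ 4 =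
      16 * (R ^ 2 / (ε ^ 2 + R ^ 2)) ^ 2 - 32 / 3 * (R ^ 2 / (ε ^ 2 + R ^ 2)) ^ 3 := by
  have hcont := (contDiff_bubble (n := 0) hε).continuous
  rw [intervalIntegral.integral_eq_sub_of_hasDerivAt
    (fun r _ => hasDerivAt_primitive_bubble_pow_four hε r)
    (Continuous.intervalIntegrable (by fun_prop) _ _)]
  simp

theorem continuous_pow_three_mul_sq_mul_log {φ : ℝ → ℝ} (hφ : Continuous φ) (F μ : ℝ) :
    Continuous fun r => r ^ 3 * (φ r ^ 2 * (F + μ * log (φ r ^ 2))) := by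
  have hlog : Continuous fun r => φ r ^ 2 * log (φ r ^ 2) := continuous_mul_log.comp (hφ.pow 2)
  have hsplit : (fun r => r ^ 3 * (φ r ^ 2 * (F + μ * log (φ r ^ 2)))) =
      fun r => r ^ 3 * (F * φ r ^ 2 + μ * (φ r ^ 2 * log (φ r ^ 2))) := by
    ext r
    ring
  rw [hsplit]
  exact (continuous_pow 3).mul (((hφ.pow 2).const_mul F).add (hlog.const_mul μ))

theorem integral_bubble_sq_mul_log (F μ : ℝ) (hε : ε ≠ 0) (R : ℝ) :
    ∫ r in 0..R, r ^ 3 * (bubble ε r ^ 2 * (F + μ * log (bubble ε r ^ 2))) =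
      4 * ε ^ 2 * (2 * -log ε * (F - μ + μ * log 8 -
          μ * (log (ε ^ 2 + R ^ 2) + ε ^ 2 / (ε ^ 2 + R ^ 2))) +
        ((F + μ * log 8) * (log (ε ^ 2 + R ^ 2) + ε ^ 2 / (ε ^ 2 + R ^ 2) - 1) -
          μ * log (ε ^ 2 + R ^ 2) ^ 2 -
          2 * μ * (ε ^ 2 / (ε ^ 2 + R ^ 2) * (log (ε ^ 2 + R ^ 2) + 1)) + 2 * μ)) := by
  have hcont := continuous_pow_three_mul_sq_mul_log (contDiff_bubble (n := 0) hε).continuous F μ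
  rw [intervalIntegral.integral_eq_sub_of_hasDerivAt
    (fun r _ => hasDerivAt_primitive_bubble_sq_mul_log F μ hε r) (hcont.intervalIntegrable _ _)]
  have hδ : ε ^ 2 / (ε ^ 2 + 0 ^ 2) = 1 := by simp [hε]
  have hℓ : log (ε ^ 2 + 0 ^ 2) = 2 * log ε := by simp
  rw [hδ, hℓ]
  ring

theorem tendsto_integral_bubble_sq_mul_log (F μ : ℝ) (hR : R ≠ 0) :
    Tendsto (fun ε => (∫ r in 0..R, r ^ 3 * (bubble ε r ^ 2 * (F + μ * log (bubble ε r ^ 2)))) /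
      (ε ^ 2 * -log ε)) (𝓝[>] 0) (𝓝 (8 * (F - μ + μ * log 8 - 2 * μ * log R))) := by
  have hsq : Tendsto (fun ε : ℝ => ε ^ 2) (𝓝[>] 0) (𝓝 0) :=
    ((continuous_pow 2).tendsto' 0 0 (by simp)).mono_left nhdsWithin_le_nhds
  have hw : Tendsto (fun ε : ℝ => ε ^ 2 + R ^ 2) (𝓝[>] 0) (𝓝 (R ^ 2)) := by
    simpa using hsq.add_const (R ^ 2)
  have hδ : Tendsto (fun ε : ℝ => ε ^ 2 / (ε ^ 2 + R ^ 2)) (𝓝[>] 0) (𝓝 (0 / R ^ 2)) :=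
    hsq.div hw (by positivity)
  rw [zero_div] at hδ
  have hℓ : Tendsto (fun ε : ℝ => log (ε ^ 2 + R ^ 2)) (𝓝[>] 0) (𝓝 (2 * log R)) := by
    simpa using hw.log (by positivity)
  have hL : Tendsto (fun ε : ℝ => -log ε) (𝓝[>] 0) atTop :=
    tendsto_neg_atBot_atTop.comp tendsto_log_nhdsGT_zero
  have hmain := (tendsto_const_nhds (x := F - μ + μ * log 8)).sub ((hℓ.add hδ).const_mul μ)
  have hrem := (((((hℓ.add hδ).sub_const 1).const_mul (F + μ * log 8)).sub
    ((hℓ.pow 2).const_mul μ)).sub ((hδ.mul (hℓ.add_const 1)).const_mul (2 * μ))).add_const (2 * μ)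
  have hlim := (hmain.const_mul 8).add ((hrem.div_atTop hL).const_mul 4)
  rw [show 8 * (F - μ + μ * log 8 - μ * (2 * log R + 0)) + 4 * 0 =
    8 * (F - μ + μ * log 8 - 2 * μ * log R) by ring] at hlim
  refine hlim.congr' ?_
  filter_upwards [self_mem_nhdsWithin, hL.eventually_gt_atTop 0] with ε (hε : 0 < ε) hLε
  have hlog : log ε ≠ 0 := (neg_pos.1 hLε).ne
  rw [integral_bubble_sq_mul_log F μ hε.ne']
  field_simp [hlog]
  ring

theorem tendsto_sq_div_sq_add_sq_atTop (ε : ℝ) :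
    Tendsto (fun r : ℝ => r ^ 2 / (ε ^ 2 + r ^ 2)) atTop (𝓝 1) := by
  have hw : Tendsto (fun r : ℝ => ε ^ 2 + r ^ 2) atTop atTop :=
    tendsto_atTop_add_const_left _ _ (tendsto_pow_atTop two_ne_zero)
  have hlim := (hw.const_div_atTop (ε ^ 2)).const_sub 1
  rw [sub_zero] at hlim
  refine hlim.congr' ?_
  filter_upwards [eventually_ne_atTop 0] with r hr
  field_simp
  ring

theorem integral_Ioi_deriv_bubble_sq (hε : ε ≠ 0) :
    ∫ r in Ioi 0, r ^ 3 * deriv (bubble ε) r ^ 2 = 16 / 3 := by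
  have hlim := ((tendsto_sq_div_sq_add_sq_atTop ε).pow 3).const_mul (16 / 3)
  rw [integral_Ioi_of_hasDerivAt_of_nonneg'
    (fun r _ => hasDerivAt_primitive_deriv_bubble_sq hε r)
    (fun r (hr : 0 < r) => by positivity) hlim]
  norm_num

theorem one_sub_sq_div_le (hR : R ≠ 0) (ε : ℝ) :
    1 - R ^ 2 / (ε ^ 2 + R ^ 2) ≤ ε ^ 2 / R ^ 2 := by
  calc 1 - R ^ 2 / (ε ^ 2 + R ^ 2) = ε ^ 2 / (ε ^ 2 + R ^ 2) := by field_simp; ring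
    _ ≤ ε ^ 2 / R ^ 2 := by gcongr; exact le_add_of_nonneg_left (sq_nonneg ε)

theorem integral_deriv_bubble_sq_le (hε : ε ≠ 0) (R : ℝ) :
    ∫ r in 0..R, r ^ 3 * deriv (bubble ε) r ^ 2 ≤ 16 / 3 := by
  rw [integral_deriv_bubble_sq hε]
  have hq : R ^ 2 / (ε ^ 2 + R ^ 2) ≤ 1 :=
    div_le_one_of_le₀ (le_add_of_nonneg_left (sq_nonneg ε)) (by positivity)
  exact mul_le_of_le_one_right (by norm_num) (pow_le_one₀ (by positivity) hq)

theorem le_integral_bubble_pow_four (hε : ε ≠ 0) (hR : R ≠ 0) :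
    16 / 3 - 16 / R ^ 2 * ε ^ 2 ≤ ∫ r in 0..R, r ^ 3 * bubble ε r ^ 4 := by
  rw [integral_bubble_pow_four hε]
  have hδ := one_sub_sq_div_le hR ε
  set q := R ^ 2 / (ε ^ 2 + R ^ 2)
  have hq₀ : 0 ≤ q := by positivity
  have hq₁ : q ≤ 1 := div_le_one_of_le₀ (le_add_of_nonneg_left (sq_nonneg ε)) (by positivity)
  calc 16 / 3 - 16 / R ^ 2 * ε ^ 2 = 16 / 3 - 16 * (ε ^ 2 / R ^ 2) := by ring
    _ ≤ 16 / 3 - 16 * (1 - q) := by gcongr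
    _ ≤ 16 * q ^ 2 - 32 / 3 * q ^ 3 := by
        have : 0 ≤ q * (1 - q) := mul_nonneg hq₀ (sub_nonneg.2 hq₁)
        nlinarith [pow_nonneg (sub_nonneg.2 hq₁) 3]

end Bubble

theorem mul_add_mul_log_le {p q F μ : ℝ} (hμ : 0 ≤ μ) (hp : p ∈ Icc 0 1) (hq : q ∈ Icc 0 1) :
    q * (F + μ * log q) ≤ p * q * (F + μ * log (p * q)) + (|F| + μ) * q := by
  have hlog_mul : p * q * log (p * q) = q * (p * log p) + p * (q * log q) := by
    have h := negMulLog_mul p q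
    simp only [negMulLog] at h
    linarith
  have hplog : -1 ≤ p * log p := by
    linarith [InformationTheory.klFun_nonneg hp.1, InformationTheory.klFun_apply p, hp.1]
  have hqlog : q * log q ≤ p * (q * log q) :=
    le_mul_of_le_one_left (mul_nonpos_of_nonneg_of_nonpos hq.1 (log_nonpos hq.1 hq.2)) hp.2
  have hF : (1 - p) * F ≤ |F| :=
    (mul_le_mul_of_nonneg_left (le_abs_self F) (sub_nonneg.2 hp.2)).trans
      (mul_le_of_le_one_left (abs_nonneg F) (sub_le_self 1 hp.1))
  calc q * (F + μ * log q)
      = q * ((1 - p) * F) + p * q * F + μ * (q * log q) := by ring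
    _ ≤ q * |F| + p * q * F + μ * (p * (q * log q)) := by
        gcongr
        exact hq.1
    _ ≤ q * |F| + p * q * F + μ * (p * (q * log q)) + μ * (q * (p * log p + 1)) :=
        le_add_of_nonneg_right (mul_nonneg hμ (mul_nonneg hq.1 (by linarith)))
    _ = p * q * (F + μ * log (p * q)) + (|F| + μ) * q := by linear_combination -μ * hlog_mul

section Cutoff

/-- `ψ` is the `C¹` profile of a radial cutoff function that equals `1` up to the radius `ρ` and
vanishes from the radius `R` on. -/
structure IsRadialCutoff (ρ R : ℝ) (ψ : ℝ → ℝ) : Prop where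
  pos : 0 < ρ
  contDiff : ContDiff ℝ 1 ψ
  eq_one : ∀ r, 0 ≤ r → r ≤ ρ → ψ r = 1
  mem_Icc : ∀ r, ρ ≤ r → r ≤ R → ψ r ∈ Icc 0 1
  eq_zero : ∀ r, R ≤ r → ψ r = 0

/-- The radial profile of the truncated bubble `U_ε`: the latter is
`x ↦ cutoffBubble ψ ε ‖x‖`. -/
noncomputable def cutoffBubble (ψ : ℝ → ℝ) (ε r : ℝ) : ℝ := ψ r * bubble ε r

theorem contDiff_cutoffBubble {n : WithTop ℕ∞} {ψ : ℝ → ℝ} {ε : ℝ} (hψ : ContDiff ℝ n ψ)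
    (hε : ε ≠ 0) : ContDiff ℝ n (cutoffBubble ψ ε) :=
  hψ.mul (contDiff_bubble hε)

namespace IsRadialCutoff

variable {ψ : ℝ → ℝ} {ρ R ε r : ℝ}

theorem lt (hψ : IsRadialCutoff ρ R ψ) : ρ < R := by
  by_contra! h
  exact zero_ne_one ((hψ.eq_zero ρ h).symm.trans (hψ.eq_one ρ hψ.pos.le le_rfl))

theorem outer_pos (hψ : IsRadialCutoff ρ R ψ) : 0 < R := hψ.pos.trans hψ.lt

theorem mem_Icc_of_nonneg (hψ : IsRadialCutoff ρ R ψ) (hr : 0 ≤ r) : ψ r ∈ Icc 0 1 := by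
  rcases le_total r ρ with hρ | hρ
  · simp [hψ.eq_one r hr hρ]
  rcases le_total r R with hR | hR
  · exact hψ.mem_Icc r hρ hR
  · simp [hψ.eq_zero r hR]

theorem sq_mem_Icc (hψ : IsRadialCutoff ρ R ψ) (hr : 0 ≤ r) : ψ r ^ 2 ∈ Icc 0 1 :=
  have h := hψ.mem_Icc_of_nonneg hr
  ⟨sq_nonneg _, pow_le_one₀ h.1 h.2⟩

theorem cutoffBubble_nonneg (hψ : IsRadialCutoff ρ R ψ) (hε : 0 ≤ ε) (hr : 0 ≤ r) :
    0 ≤ cutoffBubble ψ ε r :=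
  mul_nonneg (hψ.mem_Icc_of_nonneg hr).1 (bubble_nonneg hε r)

theorem cutoffBubble_eq_bubble (hψ : IsRadialCutoff ρ R ψ) (hr : r ∈ Icc 0 ρ) :
    cutoffBubble ψ ε r = bubble ε r := by
  rw [cutoffBubble, hψ.eq_one r hr.1 hr.2, one_mul]

theorem cutoffBubble_eq_zero (hψ : IsRadialCutoff ρ R ψ) (hr : R ≤ r) :
    cutoffBubble ψ ε r = 0 := by
  rw [cutoffBubble, hψ.eq_zero r hr, zero_mul]

theorem deriv_cutoffBubble_eq_deriv_bubble (hψ : IsRadialCutoff ρ R ψ) (hr : r ∈ Ioo 0 ρ) :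
    deriv (cutoffBubble ψ ε) r = deriv (bubble ε) r :=
  EventuallyEq.deriv_eq <| eventually_of_mem (Ioo_mem_nhds hr.1 hr.2) fun _ hs =>
    hψ.cutoffBubble_eq_bubble (Ioo_subset_Icc_self hs)

theorem cutoffBubble_sq_le (hψ : IsRadialCutoff ρ R ψ) (hr : 0 ≤ r) :
    cutoffBubble ψ ε r ^ 2 ≤ bubble ε r ^ 2 := by
  rw [cutoffBubble, mul_pow]
  exact mul_le_of_le_one_left (sq_nonneg _) (hψ.sq_mem_Icc hr).2

theorem deriv_cutoffBubble_sq_le (hψ : IsRadialCutoff ρ R ψ) (hε : ε ≠ 0) (hr : ρ ≤ r) {M : ℝ}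
    (hM : |deriv ψ r| ≤ M) :
    deriv (cutoffBubble ψ ε) r ^ 2 ≤ 2 * (M ^ 2 * (8 / ρ ^ 4) + 32 / ρ ^ 6) * ε ^ 2 := by
  have hderiv : deriv (cutoffBubble ψ ε) r = deriv ψ r * bubble ε r + ψ r * deriv (bubble ε) r :=
    deriv_fun_mul (hψ.contDiff.differentiable one_ne_zero r)
      ((contDiff_bubble (n := 1) hε).differentiable one_ne_zero r)
  have hM' : deriv ψ r ^ 2 ≤ M ^ 2 := by
    rw [← sq_abs]
    exact pow_le_pow_left₀ (abs_nonneg _) hM 2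
  calc deriv (cutoffBubble ψ ε) r ^ 2
      ≤ 2 * (deriv ψ r ^ 2 * bubble ε r ^ 2 + ψ r ^ 2 * deriv (bubble ε) r ^ 2) := by
        rw [hderiv, ← mul_pow, ← mul_pow]
        exact add_sq_le
    _ ≤ 2 * (M ^ 2 * (8 / ρ ^ 4 * ε ^ 2) + 1 * (32 / ρ ^ 6 * ε ^ 2)) := by
        gcongr
        · exact bubble_sq_le ε hψ.pos hr
        · exact (hψ.sq_mem_Icc (hψ.pos.le.trans hr)).2
        · exact deriv_bubble_sq_le hε hψ.pos hr
    _ = 2 * (M ^ 2 * (8 / ρ ^ 4) + 32 / ρ ^ 6) * ε ^ 2 := by ring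

theorem integral_pow_three_mul_le_add (hψ : IsRadialCutoff ρ R ψ) {f g : ℝ → ℝ} {c : ℝ}
    (hc : 0 ≤ c) (hf : Continuous fun r => r ^ 3 * f r) (hg : Continuous fun r => r ^ 3 * g r)
    (hin : ∀ r ∈ Ioo 0 ρ, f r = g r) (hout : ∀ r ∈ Ico ρ R, f r ≤ g r + c) :
    ∫ r in 0..R, r ^ 3 * f r ≤ (∫ r in 0..R, r ^ 3 * g r) + R ^ 4 * c := by
  have hR := hψ.outer_pos
  have h := intervalIntegral_le_add_of_le_add (c := R ^ 3 * c) hR.le (hf.intervalIntegrable 0 R)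
    (hg.intervalIntegrable 0 R) fun r hr => by
      rcases lt_or_ge r ρ with hrρ | hrρ
      · rw [hin r ⟨hr.1, hrρ⟩]
        exact le_add_of_nonneg_right (by positivity)
      · calc r ^ 3 * f r ≤ r ^ 3 * (g r + c) :=
              mul_le_mul_of_nonneg_left (hout r ⟨hrρ, hr.2⟩) (pow_nonneg hr.1.le 3)
          _ = r ^ 3 * g r + r ^ 3 * c := mul_add _ _ _
          _ ≤ r ^ 3 * g r + R ^ 3 * c := by
              gcongr
              exacts [hr.1.le, hr.2.le]
  linarith

theorem exists_integral_deriv_cutoffBubble_sq_le (hψ : IsRadialCutoff ρ R ψ) :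
    ∃ C, ∀ ε ≠ 0,
      ∫ r in 0..R, r ^ 3 * deriv (cutoffBubble ψ ε) r ^ 2 ≤ 16 / 3 + C * ε ^ 2 := by
  obtain ⟨M, hM⟩ := isCompact_Icc.exists_bound_of_continuousOn
    (hψ.contDiff.continuous_deriv_one.continuousOn (s := Icc ρ R))
  refine ⟨R ^ 4 * (2 * (M ^ 2 * (8 / ρ ^ 4) + 32 / ρ ^ 6)), fun ε hε => ?_⟩
  have hφ' := (contDiff_cutoffBubble hψ.contDiff hε).continuous_deriv_one
  have hb' := continuous_deriv_bubble hε
  have hρ := hψ.pos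
  have hcmp := hψ.integral_pow_three_mul_le_add
    (c := 2 * (M ^ 2 * (8 / ρ ^ 4) + 32 / ρ ^ 6) * ε ^ 2) (by positivity)
    (f := fun r => deriv (cutoffBubble ψ ε) r ^ 2) (g := fun r => deriv (bubble ε) r ^ 2)
    (by fun_prop) (by fun_prop)
    (fun r hr => by rw [hψ.deriv_cutoffBubble_eq_deriv_bubble hr])
    fun r hr => (hψ.deriv_cutoffBubble_sq_le hε hr.1 (hM r (Ico_subset_Icc_self hr))).trans
      (le_add_of_nonneg_left (sq_nonneg _))
  linarith [integral_deriv_bubble_sq_le hε R]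

theorem exists_le_integral_cutoffBubble_pow_four (hψ : IsRadialCutoff ρ R ψ) :
    ∃ C, ∀ ε ≠ 0, 16 / 3 - C * ε ^ 2 ≤ ∫ r in 0..R, r ^ 3 * cutoffBubble ψ ε r ^ 4 := by
  refine ⟨16 / R ^ 2 + R ^ 4 * (64 / ρ ^ 6), fun ε hε => ?_⟩
  have hφ := (contDiff_cutoffBubble hψ.contDiff hε).continuous
  have hb := (contDiff_bubble (n := 0) hε).continuous
  have hρ := hψ.pos
  have hcmp := hψ.integral_pow_three_mul_le_add (c := 64 / ρ ^ 6 * ε ^ 2) (by positivity)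
    (f := fun r => bubble ε r ^ 4) (g := fun r => cutoffBubble ψ ε r ^ 4)
    (by fun_prop) (by fun_prop)
    (fun r hr => by rw [hψ.cutoffBubble_eq_bubble (Ioo_subset_Icc_self hr)])
    fun r hr => (bubble_pow_four_le ε hψ.pos hr.1).trans (le_add_of_nonneg_left (by positivity))
  linarith [le_integral_bubble_pow_four hε hψ.outer_pos.ne']

theorem integral_cutoffBubble_sq_le (hψ : IsRadialCutoff ρ R ψ) (hε : ε ≠ 0) :
    ∫ r in 0..R, r ^ 3 * cutoffBubble ψ ε r ^ 2 ≤ ∫ r in 0..R, r ^ 3 * bubble ε r ^ 2 := by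
  have hφ := (contDiff_cutoffBubble hψ.contDiff hε).continuous
  have hb := (contDiff_bubble (n := 0) hε).continuous
  refine intervalIntegral.integral_mono_on hψ.outer_pos.le
    (Continuous.intervalIntegrable (by fun_prop) _ _)
    (Continuous.intervalIntegrable (by fun_prop) _ _) fun r hr => ?_
  exact mul_le_mul_of_nonneg_left (hψ.cutoffBubble_sq_le hr.1) (pow_nonneg hr.1 3)

/-- For small `ε` the bubble is at most `1` on the annulus, so that cutting it off there does not
increase `-φ² log φ²` by more than a multiple of `φ²`. -/
theorem exists_le_integral_cutoffBubble_sq_mul_log (hψ : IsRadialCutoff ρ R ψ) (F : ℝ) {μ : ℝ}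
    (hμ : 0 ≤ μ) :
    ∃ C, ∀ ε ≠ 0, 8 / ρ ^ 4 * ε ^ 2 ≤ 1 →
      (∫ r in 0..R, r ^ 3 * (bubble ε r ^ 2 * (F + μ * log (bubble ε r ^ 2)))) - C * ε ^ 2 ≤
        ∫ r in 0..R, r ^ 3 * (cutoffBubble ψ ε r ^ 2 *
          (F + μ * log (cutoffBubble ψ ε r ^ 2))) := by
  refine ⟨R ^ 4 * ((|F| + μ) * (8 / ρ ^ 4)), fun ε hε hε₁ => ?_⟩
  have hρ := hψ.pos
  have hcmp := hψ.integral_pow_three_mul_le_add (c := (|F| + μ) * (8 / ρ ^ 4 * ε ^ 2))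
    (by positivity)
    (continuous_pow_three_mul_sq_mul_log (contDiff_bubble (n := 0) hε).continuous F μ)
    (continuous_pow_three_mul_sq_mul_log (contDiff_cutoffBubble hψ.contDiff hε).continuous F μ)
    (fun r hr => by rw [hψ.cutoffBubble_eq_bubble (Ioo_subset_Icc_self hr)]) fun r hr => by
      have hb := bubble_sq_le ε hψ.pos hr.1
      rw [cutoffBubble, mul_pow]
      refine (mul_add_mul_log_le hμ (hψ.sq_mem_Icc (hψ.pos.le.trans hr.1))
        ⟨sq_nonneg _, hb.trans hε₁⟩).trans ?_
      gcongr
  linarith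

end IsRadialCutoff

end Cutoff

section Asymptotics

theorem sq_sub_lt_mul_of_small {k x y K : ℝ} (hx : 0 < x) (hy : 0 ≤ y) (hyx : y ≤ K * x)
    (hxk : (4 + 2 * K + K ^ 2) * x < 3 * k) :
    (k - 2 * x - y) ^ 2 < (k - x) * (k - 2 * y) := by
  have hyy : y ^ 2 ≤ (K * x) ^ 2 := pow_le_pow_left₀ hy hyx 2
  have hxy : x * y ≤ x * (K * x) := mul_le_mul_of_nonneg_left hyx hx.le
  have hxx := mul_lt_mul_of_pos_left hxk hx
  linarith

theorem tendsto_sq_mul_neg_log :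
    Tendsto (fun ε : ℝ => ε ^ 2 * -log ε) (𝓝[>] 0) (𝓝 0) := by
  have h := (tendsto_log_mul_rpow_nhdsGT_zero two_pos).neg
  rw [neg_zero] at h
  refine h.congr fun ε => ?_
  rw [rpow_two]
  ring

theorem eventually_mul_sq_le (C : ℝ) {η : ℝ} (hη : 0 < η) :
    ∀ᶠ ε : ℝ in 𝓝[>] 0, C * ε ^ 2 ≤ η * (ε ^ 2 * -log ε) := by
  have hL : Tendsto (fun ε : ℝ => -log ε) (𝓝[>] 0) atTop :=
    tendsto_neg_atBot_atTop.comp tendsto_log_nhdsGT_zero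
  filter_upwards [hL.eventually_ge_atTop (C / η)] with ε hε
  calc C * ε ^ 2 = η * (ε ^ 2 * (C / η)) := by field_simp
    _ ≤ η * (ε ^ 2 * -log ε) := by gcongr

namespace IsRadialCutoff

variable {ψ : ℝ → ℝ} {ρ R lam μ η : ℝ}

theorem eventually_integral_deriv_cutoffBubble_sq_sub_le (hψ : IsRadialCutoff ρ R ψ) (hμ : 0 ≤ μ)
    (hη : η < 8 * (lam - 2 * μ + μ * log 8 - 2 * μ * log R)) :
    ∀ᶠ ε in 𝓝[>] 0, (∫ r in 0..R, r ^ 3 * deriv (cutoffBubble ψ ε) r ^ 2) -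
      (∫ r in 0..R, r ^ 3 * (cutoffBubble ψ ε r ^ 2 *
        (lam - μ + μ * log (cutoffBubble ψ ε r ^ 2)))) ≤ 16 / 3 - η * (ε ^ 2 * -log ε) := by
  obtain ⟨C₁, hC₁⟩ := hψ.exists_integral_deriv_cutoffBubble_sq_le
  obtain ⟨C₂, hC₂⟩ := hψ.exists_le_integral_cutoffBubble_sq_mul_log (lam - μ) hμ
  obtain ⟨η', hη', hη'_lt⟩ := exists_between hη
  have hgain := (tendsto_integral_bubble_sq_mul_log (lam - μ) μ
    hψ.outer_pos.ne').eventually_const_lt (show η' < _ by linarith)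
  have hbubble : Tendsto (fun ε : ℝ => 8 / ρ ^ 4 * ε ^ 2) (𝓝[>] 0) (𝓝 0) :=
    (Continuous.tendsto' (by fun_prop) 0 0 (by simp)).mono_left nhdsWithin_le_nhds
  filter_upwards [hgain, hbubble.eventually_le_const one_pos,
    eventually_mul_sq_le (C₁ + C₂) (sub_pos.2 hη'), Ioo_mem_nhdsGT one_pos]
    with ε hgain hbubble herror hε
  rw [lt_div_iff₀ (mul_pos (pow_pos hε.1 2) (neg_pos.2 (log_neg hε.1 hε.2)))] at hgain
  linarith [hC₁ ε hε.1.ne', hC₂ ε hε.1.ne' hbubble]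

theorem eventually_le_integral_cutoffBubble_pow_four (hψ : IsRadialCutoff ρ R ψ) (hη : 0 < η) :
    ∀ᶠ ε in 𝓝[>] 0, 16 / 3 - η * (ε ^ 2 * -log ε) ≤
      ∫ r in 0..R, r ^ 3 * cutoffBubble ψ ε r ^ 4 := by
  obtain ⟨C, hC⟩ := hψ.exists_le_integral_cutoffBubble_pow_four
  filter_upwards [eventually_mul_sq_le C hη, self_mem_nhdsWithin] with ε herror (hε : 0 < ε)
  linarith [hC ε hε.ne']

theorem eventually_integral_cutoffBubble_sq_le (hψ : IsRadialCutoff ρ R ψ) (hη : 8 < η) :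
    ∀ᶠ ε in 𝓝[>] 0, ∫ r in 0..R, r ^ 3 * cutoffBubble ψ ε r ^ 2 ≤ η * (ε ^ 2 * -log ε) := by
  have hmass := (tendsto_integral_bubble_sq_mul_log 1 0 hψ.outer_pos.ne').eventually_lt_const
    (show _ < η by linarith)
  filter_upwards [hmass, Ioo_mem_nhdsGT one_pos] with ε hmass hε
  rw [div_lt_iff₀ (mul_pos (pow_pos hε.1 2) (neg_pos.2 (log_neg hε.1 hε.2)))] at hmass
  simp only [zero_mul, add_zero, mul_one] at hmass
  exact (hψ.integral_cutoffBubble_sq_le hε.1.ne').trans hmass.le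

theorem eventually_exists_sq_sub_lt (hψ : IsRadialCutoff ρ R ψ) (hμ : 0 ≤ μ)
    (hΓ : 0 < lam - 2 * μ + μ * log 8 - 2 * μ * log R) :
    ∀ᶠ ε in 𝓝[>] 0, ∃ m b : ℝ, 0 < b ∧
      (∫ r in 0..R, r ^ 3 * deriv (cutoffBubble ψ ε) r ^ 2) -
        (∫ r in 0..R, r ^ 3 * (cutoffBubble ψ ε r ^ 2 *
          (lam - μ + μ * log (cutoffBubble ψ ε r ^ 2)))) ≤ m ∧
      b ≤ (∫ r in 0..R, r ^ 3 * cutoffBubble ψ ε r ^ 4) ∧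
      (m - μ * ∫ r in 0..R, r ^ 3 * cutoffBubble ψ ε r ^ 2) ^ 2 <
        b * (16 / 3 - 2 * (μ * ∫ r in 0..R, r ^ 3 * cutoffBubble ψ ε r ^ 2)) := by
  set Γ := lam - 2 * μ + μ * log 8 - 2 * μ * log R with hΓ_def
  have hsmall : ∀ᶠ ε : ℝ in 𝓝[>] 0,
      (4 + 2 * (9 * μ / Γ) + (9 * μ / Γ) ^ 2) * (Γ * (ε ^ 2 * -log ε)) < 3 * (16 / 3) :=
    ((tendsto_sq_mul_neg_log.const_mul Γ).const_mul _).eventually_lt_const (by norm_num)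
  filter_upwards [hsmall, Ioo_mem_nhdsGT one_pos,
    hψ.eventually_integral_deriv_cutoffBubble_sq_sub_le (lam := lam) hμ (η := 2 * Γ)
      (by linarith [hΓ_def]),
    hψ.eventually_le_integral_cutoffBubble_pow_four hΓ,
    hψ.eventually_integral_cutoffBubble_sq_le (η := 9) (by norm_num)] with ε hsmall hε ha hb hc
  set h := ε ^ 2 * -log ε
  set c := ∫ r in 0..R, r ^ 3 * cutoffBubble ψ ε r ^ 2
  have hx : 0 < Γ * h := mul_pos hΓ (mul_pos (pow_pos hε.1 2) (neg_pos.2 (log_neg hε.1 hε.2)))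
  have hc_nonneg : 0 ≤ c := intervalIntegral.integral_nonneg hψ.outer_pos.le fun r hr =>
    mul_nonneg (pow_nonneg hr.1 3) (sq_nonneg _)
  have hc_le : μ * c ≤ 9 * μ / Γ * (Γ * h) := by
    calc μ * c ≤ μ * (9 * h) := by gcongr
      _ = 9 * μ / Γ * (Γ * h) := by field_simp
  refine ⟨16 / 3 - 2 * (Γ * h), 16 / 3 - Γ * h, ?_, by rwa [← mul_assoc], hb,
    sq_sub_lt_mul_of_small hx (mul_nonneg hμ hc_nonneg) hc_le hsmall⟩
  linarith [mul_nonneg (sq_nonneg (1 + 9 * μ / Γ)) hx.le]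

end IsRadialCutoff

end Asymptotics

section DimensionFour

local notation "ℝ⁴" => EuclideanSpace ℝ (Fin 4)

/-- The surface area of the unit sphere of `ℝ⁴`, as the dimension times the volume of the unit
ball. -/
noncomputable def unitSphereArea : ℝ := 4 * volume.real (ball (0 : ℝ⁴) 1)

theorem unitSphereArea_pos : 0 < unitSphereArea :=
  mul_pos four_pos <| ENNReal.toReal_pos (measure_ball_pos _ _ one_pos).ne' measure_ball_lt_top.ne

theorem setIntegral_fun_norm {R : ℝ} (hR : 0 ≤ R) {f : ℝ → ℝ} (hfR : ∀ r, R < r → f r = 0)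
    {Ω : Set ℝ⁴} (hΩ : closedBall 0 R ⊆ Ω) :
    ∫ x in Ω, f ‖x‖ = unitSphereArea * ∫ r in 0..R, r ^ 3 * f r := by
  rw [setIntegral_fun_norm_addHaar volume hR hfR hΩ, finrank_euclideanSpace_fin, unitSphereArea]
  simp only [nsmul_eq_mul, smul_eq_mul, Nat.cast_ofNat, mul_assoc, Nat.add_one_sub_one]

theorem integral_norm_fderiv_bubble_sq {ε : ℝ} (hε : ε ≠ 0) :
    ∫ x : ℝ⁴, ‖fderiv ℝ (fun y => bubble ε ‖y‖) x‖ ^ 2 = unitSphereArea * (16 / 3) := by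
  have hdiff := (contDiff_bubble (n := 1) hε).differentiable one_ne_zero
  rw [← setIntegral_univ, setIntegral_norm_fderiv_comp_norm_sq _ hdiff, setIntegral_univ,
    integral_fun_norm_addHaar volume (fun r => deriv (bubble ε) r ^ 2),
    finrank_euclideanSpace_fin, unitSphereArea, ← integral_Ioi_deriv_bubble_sq hε]
  simp only [nsmul_eq_mul, smul_eq_mul, Nat.cast_ofNat, mul_assoc, Nat.add_one_sub_one]

theorem logEnergy_const_mul_comp_norm_lt {φ : ℝ → ℝ} {R lam μ m b k t : ℝ} {Ω : Set ℝ⁴}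
    (hφ : ContDiff ℝ 1 φ) (hφ_nonneg : ∀ r, 0 ≤ r → 0 ≤ φ r) (hφR : ∀ r, R < r → φ r = 0)
    (hR : 0 ≤ R) (hΩ : closedBall 0 R ⊆ Ω) (hμ : 0 ≤ μ) (hb : 0 < b)
    (hm : (∫ r in 0..R, r ^ 3 * deriv φ r ^ 2) -
      (∫ r in 0..R, r ^ 3 * (φ r ^ 2 * (lam - μ + μ * log (φ r ^ 2)))) ≤ m)
    (hbφ : b ≤ ∫ r in 0..R, r ^ 3 * φ r ^ 4)
    (hlt : (m - μ * ∫ r in 0..R, r ^ 3 * φ r ^ 2) ^ 2 <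
      b * (k - 2 * (μ * ∫ r in 0..R, r ^ 3 * φ r ^ 2))) (ht : 0 ≤ t) :
    logEnergy lam μ Ω (fun x => t * φ ‖x‖) < unitSphereArea * k / 4 := by
  have hφ'R (r : ℝ) (hr : R < r) : deriv φ r = 0 := by
    have hzero : φ =ᶠ[𝓝 r] fun _ => 0 := eventually_of_mem (Ioi_mem_nhds hr) hφR
    rw [hzero.deriv_eq, deriv_const]
  have hdiff : Differentiable ℝ φ := hφ.differentiable one_ne_zero
  have hgrad := (setIntegral_norm_fderiv_comp_norm_sq volume hdiff Ω).trans <|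
    setIntegral_fun_norm (f := fun r => deriv φ r ^ 2) hR (by simp +contextual [hφ'R]) hΩ
  have hpot := setIntegral_fun_norm (f := fun r => φ r ^ 2 * (lam - μ + μ * log (φ r ^ 2))) hR
    (by simp +contextual [hφR]) hΩ
  have hfour := setIntegral_fun_norm (f := fun r => φ r ^ 4) hR (by simp +contextual [hφR]) hΩ
  have hmass := setIntegral_fun_norm (f := fun r => φ r ^ 2) hR (by simp +contextual [hφR]) hΩ
  have hsq : Integrable fun x : ℝ⁴ => φ ‖x‖ ^ 2 :=
    integrable_comp_norm (f := fun r => φ r ^ 2) (R := R) volume (hφ.continuous.pow 2)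
      (by simp +contextual [hφR])
  have hlog : Integrable fun x : ℝ⁴ => φ ‖x‖ ^ 2 * log (φ ‖x‖ ^ 2) :=
    integrable_comp_norm (f := fun r => φ r ^ 2 * log (φ r ^ 2)) (R := R) volume
      (continuous_mul_log.comp (hφ.continuous.pow 2)) (by simp +contextual [hφR])
  have hσ := unitSphereArea_pos
  refine logEnergy_const_mul_lt (m := unitSphereArea * m) (b := unitSphereArea * b) hμ
    (fun x => hφ_nonneg _ (norm_nonneg x)) hsq.integrableOn hlog.integrableOn (mul_pos hσ hb)
    ?_ ?_ ?_ ht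
  · rw [hgrad, hpot, ← mul_sub]
    exact mul_le_mul_of_nonneg_left hm hσ.le
  · rw [hfour]
    exact mul_le_mul_of_nonneg_left hbφ hσ.le
  · rw [hmass]
    linarith [mul_lt_mul_of_pos_left hlt (pow_pos hσ 2)]

theorem exp_mul_two_mul_rpow_lt {lam μ ρ : ℝ} (hμ : 0 ≤ μ) (hρ : 0 ≤ ρ)
    (h : (25 : ℝ) ^ μ * exp (2 * μ - lam) * ρ ^ (2 * μ) < 8 ^ μ) :
    exp (2 * μ - lam) * (2 * ρ) ^ (2 * μ) < 8 ^ μ := by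
  calc exp (2 * μ - lam) * (2 * ρ) ^ (2 * μ)
      = 4 ^ μ * exp (2 * μ - lam) * ρ ^ (2 * μ) := by
        rw [mul_rpow zero_le_two hρ, rpow_mul zero_le_two, rpow_two]
        norm_num
        ring
    _ ≤ 25 ^ μ * exp (2 * μ - lam) * ρ ^ (2 * μ) := by
        gcongr
        norm_num
    _ < 8 ^ μ := h

theorem stmt_18_general {ψ : ℝ → ℝ} {ρ R lam μ : ℝ} {Ω : Set ℝ⁴}
    (hψ : IsRadialCutoff ρ R ψ) (hμ : 0 ≤ μ) (hΩ : closedBall 0 R ⊆ Ω)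
    (hR : exp (2 * μ - lam) * R ^ (2 * μ) < 8 ^ μ) :
    ∀ᶠ ε in 𝓝[>] 0, ∀ t, 0 ≤ t →
      logEnergy lam μ Ω (fun x => t * cutoffBubble ψ ε ‖x‖) <
        (∫ x : ℝ⁴, ‖fderiv ℝ (fun y => bubble 1 ‖y‖) x‖ ^ 2) / 4 := by
  have hR₀ := hψ.outer_pos
  have hΓ : 0 < lam - 2 * μ + μ * log 8 - 2 * μ * log R := by
    have h := log_lt_log (by positivity) hR
    rw [log_mul (by positivity) (by positivity), log_exp, log_rpow hR₀, log_rpow (by norm_num)] at h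
    linarith
  filter_upwards [hψ.eventually_exists_sq_sub_lt hμ hΓ, self_mem_nhdsWithin]
    with ε ⟨m, b, hb, hm, hbφ, hlt⟩ (hε : 0 < ε) t ht
  rw [integral_norm_fderiv_bubble_sq one_ne_zero]
  exact logEnergy_const_mul_comp_norm_lt (contDiff_cutoffBubble hψ.contDiff hε.ne')
    (fun r hr => hψ.cutoffBubble_nonneg hε.le hr) (fun r hr => hψ.cutoffBubble_eq_zero hr.le)
    hR₀.le hΩ hμ hb hm hbφ hlt ht

end DimensionFour

/-- Lemma 3.5, case `μ > 0`, `N = 4`: for every `ρ ∈ (0,1]` with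
`8^μ > 25^μ e^{2μ-λ} ρ^{2μ}` and `B_{2ρ}(0) ⊆ Ω`, and `U_ε(x) = ψ(|x|) u_ε(x)`,
there is `ε₀ > 0` with `I(t U_ε) < K₄/4 = (1/4) S²` for all `ε ∈ (0, ε₀)`, `t ≥ 0`
(here `2* = 4`). -/
theorem stmt_18 (lam μ : ℝ) (hμ : 0 < μ)
    (Ω : Set (EuclideanSpace ℝ (Fin 4))) (hΩo : IsOpen Ω)
    (hΩb : Bornology.IsBounded Ω) (h0Ω : (0 : EuclideanSpace ℝ (Fin 4)) ∈ Ω)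
    (u : ℝ → EuclideanSpace ℝ (Fin 4) → ℝ)
    (hu : ∀ ε : ℝ, 0 < ε → ∀ x : EuclideanSpace ℝ (Fin 4),
      u ε x = Real.sqrt 8 * ε / (ε ^ 2 + ‖x‖ ^ 2))
    (ρ : ℝ) (hρ : ρ ∈ Set.Ioc (0 : ℝ) 1)
    (hρμ : (8 : ℝ) ^ μ > (25 : ℝ) ^ μ * Real.exp (2 * μ - lam) * ρ ^ (2 * μ))
    (hball : Metric.closedBall (0 : EuclideanSpace ℝ (Fin 4)) (2 * ρ) ⊆ Ω)
    (ψ : ℝ → ℝ) (hψs : ContDiff ℝ (⊤ : ℕ∞) ψ)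
    (hψ1 : ∀ r : ℝ, 0 ≤ r → r ≤ ρ → ψ r = 1)
    (hψ01 : ∀ r : ℝ, ρ ≤ r → r ≤ 2 * ρ → ψ r ∈ Set.Icc (0 : ℝ) 1)
    (hψ0 : ∀ r : ℝ, 2 * ρ ≤ r → ψ r = 0)
    (I : (EuclideanSpace ℝ (Fin 4) → ℝ) → ℝ)
    (hI : ∀ v : EuclideanSpace ℝ (Fin 4) → ℝ,
      I v = (1 / 2) * (∫ x in Ω, ‖fderiv ℝ v x‖ ^ 2) -
        (1 / 4) * (∫ x in Ω, (max (v x) 0) ^ 4) -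
        (lam / 2) * (∫ x in Ω, (max (v x) 0) ^ 2) -
        (μ / 2) * (∫ x in Ω, (max (v x) 0) ^ 2 * (Real.log ((max (v x) 0) ^ 2) - 1))) :
    ∃ ε₀ : ℝ, 0 < ε₀ ∧ ∀ ε ∈ Set.Ioo (0 : ℝ) ε₀, ∀ t : ℝ, 0 ≤ t →
      I (fun x => t * (ψ ‖x‖ * u ε x)) <
        (∫ x : EuclideanSpace ℝ (Fin 4), ‖fderiv ℝ (u 1) x‖ ^ 2) / 4 := by
  have hψ : IsRadialCutoff ρ (2 * ρ) ψ :=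
    ⟨hρ.1, hψs.of_le (by exact_mod_cast le_top), hψ1, hψ01, hψ0⟩
  have hu' (ε : ℝ) (hε : 0 < ε) : u ε = fun x => bubble ε ‖x‖ := funext (hu ε hε)
  obtain ⟨ε₀, hε₀, hlt⟩ := mem_nhdsGT_iff_exists_Ioo_subset.1 <|
    stmt_18_general hψ hμ.le hball (exp_mul_two_mul_rpow_lt hμ.le hρ.1.le hρμ)
  refine ⟨ε₀, hε₀, fun ε hε t ht => ?_⟩
  rw [hI, hu' ε hε.1, hu' 1 one_pos]
  exact hlt hε t ht
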